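/- arXiv:1107.0557 — 2 statements merged into one kernel-verified Lean document; each statement's English description precedes it below -/
import Mathlib

section
/- If M is a small-Ω¹ right R-module, then Ext¹_R(M, −) commutes with direct sums: for every family (M_i)_{i∈I} of right R-modules, the canonical homomorphism ⨁_{i∈I} Ext¹_R(M, M_i) → Ext¹_R(M, ⨁_{i∈I} M_i) is an isomorphism. -/
open CategoryTheory CategoryTheory.Limits Opposite

noncomputable section

/-- The category of right `R`-modules. -/
abbrev RMod (R : Type) [Ring R] := ModuleCat.{0} Rᵐᵒᵖ

/-- `R` as a right module over itself. -/
abbrev regR (R : Type) [Ring R] : RMod R := ModuleCat.of Rᵐᵒᵖ R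

/-- The covariant functor `Ext¹_R(M, -)` (more generally `Extⁿ_R(M, -)`). -/
abbrev extFun (R : Type) [Ring R] (n : ℕ) (M : RMod R) : RMod R ⥤ ModuleCat ℤ :=
  (Ext ℤ (RMod R) n).obj (op M)

/-- `Ext¹_R(M,-)` commutes with direct limits (direct systems over directed sets). -/
def CommutesWithDirectLimits (R : Type) [Ring R] (M : RMod R) : Prop :=
  ∀ (J : Type) [Preorder J] [IsDirected J (· ≤ ·)] [Nonempty J],
    PreservesColimitsOfShape J (extFun R 1 M)

/-- `Ext¹_R(M,-)` commutes with direct sums. -/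
def CommutesWithDirectSums (R : Type) [Ring R] (M : RMod R) : Prop :=
  ∀ (ι : Type), PreservesColimitsOfShape (Discrete ι) (extFun R 1 M)

/-- `Extⁿ_R(M,-)` commutes with direct sums of copies of `R`: the canonical map
`Extⁿ_R(M,R)^{(ι)} → Extⁿ_R(M,R^{(ι)})` is an isomorphism for every index set `ι`. -/
def CommutesWithSumsOfR (R : Type) [Ring R] (n : ℕ) (M : RMod R) : Prop :=
  ∀ (ι : Type), IsIso (Sigma.desc
    (fun i : ι => (extFun R n M).map (Sigma.ι (fun _ : ι => regR R) i)))

/-- A module `K` is small iff `Hom_R(K,-)` commutes with direct sums. -/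
def IsSmallModule (R : Type) [Ring R] (K : RMod R) : Prop :=
  ∀ (ι : Type), PreservesColimitsOfShape (Discrete ι) (preadditiveCoyoneda.obj (op K))

/-- `M` has a short exact sequence `0 → K → P → M → 0` with `P` projective and `K`
satisfying the property `Q` (e.g. `M` is fp-Ω¹, fg-Ω¹ or small-Ω¹). -/
def IsOmega1 (R : Type) [Ring R] (Q : RMod R → Prop) (M : RMod R) : Prop :=
  ∃ (K P : RMod R) (i : K ⟶ P) (p : P ⟶ M) (w : i ≫ p = 0),
    Mono i ∧ Epi p ∧ (ShortComplex.mk i p w).Exact ∧ Projective P ∧ Q K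

/-- `M` has projective dimension at most 1. -/
def HasProjDimLE1 (R : Type) [Ring R] (M : RMod R) : Prop :=
  ∃ (P₁ P₀ : RMod R) (f : P₁ ⟶ P₀) (p : P₀ ⟶ M) (w : f ≫ p = 0),
    Projective P₁ ∧ Projective P₀ ∧ Mono f ∧ Epi p ∧ (ShortComplex.mk f p w).Exact

/-- `M` is `FP₂`: it admits a projective resolution which is finitely generated in
dimensions `0`, `1` and `2`. -/
def IsFP2 (R : Type) [Ring R] (M : RMod R) : Prop :=
  ∃ (P₂ P₁ P₀ : RMod R) (d₂ : P₂ ⟶ P₁) (d₁ : P₁ ⟶ P₀) (p : P₀ ⟶ M)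
    (w₂ : d₂ ≫ d₁ = 0) (w₁ : d₁ ≫ p = 0),
    Projective P₂ ∧ Projective P₁ ∧ Projective P₀ ∧
    Module.Finite Rᵐᵒᵖ P₂ ∧ Module.Finite Rᵐᵒᵖ P₁ ∧ Module.Finite Rᵐᵒᵖ P₀ ∧
    Epi p ∧ (ShortComplex.mk d₂ d₁ w₂).Exact ∧ (ShortComplex.mk d₁ p w₁).Exact

/-- `M` has injective dimension at most `n`, i.e. `Ext^k(-,M)` vanishes for `k > n`. -/
def HasInjDimLE (R : Type) [Ring R] (n : ℕ) (M : RMod R) : Prop :=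
  ∀ (k : ℕ), n < k → ∀ (N : RMod R), IsZero (((Ext ℤ (RMod R) k).obj (op N)).obj M)

/-!
A resolution of the small module `K`, spliced onto `0 → K → P → M → 0`, resolves `M`, and `K` is
then the cokernel of its differential `d₂`. For a right exact functor `F` this embeds `L₁F(M)` into
`F(K)`, naturally in `F`; taking `F = Hom(-, Y)ᵒᵖ` gives an epimorphism `Hom(K, Y) → Ext¹(M, Y)`
natural in `Y`.

Comparing the two functors on a coproduct, `⨁ Ext¹(M, Mᵢ) → Ext¹(M, ⨁ Mᵢ)` is surjective because
`⨁ Hom(K, Mᵢ) → Hom(K, ⨁ Mᵢ)` is. It is injective for any functor to modules preserving zero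
morphisms: the images of the projections `⨁ Mᵢ → Mⱼ` recover the components of an element of the
direct sum.
-/

universe w v u

section Comparison

variable {A : Type*} [Ring A] {ι : Type w} {C : Type u} [Category.{max w v} C]

lemma eq_zero_of_forall_sigma_desc_single_eq_zero [DecidableEq ι]
    (Z : ι → ModuleCat.{max w v} A) (x : (∐ Z : ModuleCat A))
    (hx : ∀ i, Sigma.desc (Pi.single i (𝟙 (Z i))) x = 0) : x = 0 := by
  let e := ModuleCat.coprodIsoDirectSum Z
  have he (i : ι) : Sigma.desc (Pi.single i (𝟙 (Z i))) =
      e.hom ≫ ModuleCat.ofHom (DirectSum.component A ι (fun i => Z i) i) := by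
    refine Sigma.hom_ext _ _ fun j => ?_
    rw [Sigma.ι_desc, ← Category.assoc, ModuleCat.ι_coprodIsoDirectSum_hom]
    ext y
    rcases eq_or_ne j i with rfl | h
    · simp
    · simp [h, DirectSum.component.of]
  have hx' : e.hom x = 0 := DFinsupp.ext fun i => by
    simpa only [he, ConcreteCategory.comp_apply] using! hx i
  exact (ModuleCat.mono_iff_injective e.hom).1 inferInstance (hx'.trans (map_zero e.hom.hom).symm)

lemma mono_sigmaComparison [HasZeroMorphisms C] (F : C ⥤ ModuleCat.{max w v} A)
    [F.PreservesZeroMorphisms] (f : ι → C) [HasCoproduct f] : Mono (sigmaComparison F f) := by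
  classical
  rw [ModuleCat.mono_iff_injective, injective_iff_map_eq_zero]
  intro x hx
  refine eq_zero_of_forall_sigma_desc_single_eq_zero _ x fun i => ?_
  have h : Sigma.desc (Pi.single i (𝟙 (F.obj (f i)))) =
      sigmaComparison F f ≫ F.map (Sigma.desc (Pi.single i (𝟙 (f i)))) := by
    rw [sigmaComparison_map_desc]
    congr 1
    ext1 j
    rcases eq_or_ne j i with rfl | h
    · simp
    · simp [h]
  rw [h, ConcreteCategory.comp_apply, hx, map_zero]

end Comparison

lemma epi_sigmaComparison_of_epi {C D : Type*} [Category* C] [Category* D] {ι : Type*}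
    {G F : C ⥤ D} (α : G ⟶ F) [∀ X, Epi (α.app X)] (f : ι → C) [HasCoproduct f]
    [HasCoproduct fun i => G.obj (f i)] [HasCoproduct fun i => F.obj (f i)]
    [Epi (sigmaComparison G f)] : Epi (sigmaComparison F f) := by
  have naturality : Limits.Sigma.map (fun i => α.app (f i)) ≫ sigmaComparison F f =
      sigmaComparison G f ≫ α.app (∐ f) :=
    Sigma.hom_ext _ _ fun i => by simp
  have : Epi (Limits.Sigma.map (fun i => α.app (f i)) ≫ sigmaComparison F f) :=
    naturality ▸ epi_comp _ _
  exact epi_of_epi (Limits.Sigma.map fun i => α.app (f i)) _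

lemma preservesZeroMorphisms_of_epi {C D : Type*} [Category* C] [Category* D]
    [HasZeroMorphisms C] [HasZeroMorphisms D] {G F : C ⥤ D} (α : G ⟶ F) [∀ X, Epi (α.app X)]
    [G.PreservesZeroMorphisms] : F.PreservesZeroMorphisms where
  map_zero X Y := by
    rw [← cancel_epi (α.app X), ← α.naturality, G.map_zero, zero_comp, comp_zero]

lemma preservesColimit_discrete_of_epi {A : Type*} [Ring A] {ι : Type w} {C : Type u}
    [Category.{max w v} C] [HasZeroMorphisms C] {G F : C ⥤ ModuleCat.{max w v} A}
    [G.PreservesZeroMorphisms] (α : G ⟶ F) [∀ X, Epi (α.app X)] (f : ι → C)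
    [PreservesColimit (Discrete.functor f) G] : PreservesColimit (Discrete.functor f) F where
  preserves {c} hc := by
    have : HasCoproduct f := ⟨c, hc⟩
    have := preservesZeroMorphisms_of_epi α
    have := mono_sigmaComparison.{w, v} F f
    have := epi_sigmaComparison_of_epi α f
    have := isIso_of_mono_of_epi (sigmaComparison F f)
    exact (PreservesCoproduct.of_iso_comparison F f).preserves hc

section Splice

variable {C : Type*} [Category* C]

lemma quasiIso_toSingle₀Equiv_symm_of_exact [Abelian C] {X : ChainComplex C ℕ} {Z : C}
    {f : X.X 0 ⟶ Z} (hf : Epi f) (w : X.d 1 0 ≫ f = 0) (h₀ : (ShortComplex.mk _ _ w).Exact)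
    (h : ∀ n, (ShortComplex.mk _ _ (X.d_comp_d (n + 2) (n + 1) n)).Exact) :
    QuasiIso ((ChainComplex.toSingle₀Equiv X Z).symm ⟨f, w⟩) where
  quasiIsoAt
    | 0 => by
      rw [ChainComplex.quasiIsoAt₀_iff,
        ShortComplex.quasiIso_iff_of_zeros' _ (X.shape 0 0 (by simp)) rfl rfl]
      exact ⟨by simpa using! h₀, by simpa using! hf⟩
    | n + 1 => by
      rw [quasiIsoAt_iff_exactAt' _ _ (ChainComplex.exactAt_succ_single_obj _ _),
        HomologicalComplex.exactAt_iff' _ (n + 2) (n + 1) n (by simp) (by simp)]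
      exact h n

lemma exact_comp_mono [HasZeroMorphisms C] {X Y Z W : C} {f : X ⟶ Y} {g : Y ⟶ Z} {w : f ≫ g = 0}
    (h : (ShortComplex.mk f g w).Exact) (i : Z ⟶ W) (_ : Mono i) (w' : f ≫ g ≫ i = 0) :
    (ShortComplex.mk f (g ≫ i) w').Exact :=
  let φ : ShortComplex.mk f g w ⟶ ShortComplex.mk f (g ≫ i) w' :=
    { τ₁ := 𝟙 X, τ₂ := 𝟙 Y, τ₃ := i }
  (ShortComplex.exact_iff_of_epi_of_isIso_of_mono φ).1 h

lemma exact_epi_comp [HasZeroMorphisms C] {W X Y Z : C} {f : X ⟶ Y} {g : Y ⟶ Z} {w : f ≫ g = 0}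
    (h : (ShortComplex.mk f g w).Exact) (p : W ⟶ X) [Epi p] (w' : (p ≫ f) ≫ g = 0) :
    (ShortComplex.mk (p ≫ f) g w').Exact :=
  let φ : ShortComplex.mk (p ≫ f) g w' ⟶ ShortComplex.mk f g w :=
    { τ₁ := p, τ₂ := 𝟙 Y, τ₃ := 𝟙 Z }
  (ShortComplex.exact_iff_of_epi_of_isIso_of_mono φ).2 h

/-- Given a short exact sequence `0 ⟶ S.X₁ ⟶ S.X₂ ⟶ S.X₃ ⟶ 0` with `S.X₂` projective, the
projective resolution of `S.X₃` with `S.X₂` in degree `0` and a resolution `Q` of `S.X₁`, shifted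
by one, above it. -/
def spliceProjectiveResolution [Abelian C] {S : ShortComplex C} (hS : S.ShortExact)
    [Projective S.X₂] (Q : ProjectiveResolution S.X₁) : ProjectiveResolution S.X₃ :=
  -- The target of `Q.π.f 0` is `((single₀ C).obj S.X₁).X 0`, which is `S.X₁` only after unfolding.
  let ε : Q.complex.X 0 ⟶ S.X₁ := Q.π.f 0
  have : Epi ε := inferInstanceAs (Epi (Q.π.f 0))
  have hε : Q.complex.d 1 0 ≫ ε ≫ S.f = 0 :=
    (Category.assoc _ _ _).symm.trans ((Q.complex_d_comp_π_f_zero =≫ S.f).trans zero_comp)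
  have hεg : (ε ≫ S.f) ≫ S.g = 0 := by rw [Category.assoc, S.zero, comp_zero]
  let X := Q.complex.augment (ε ≫ S.f) hε
  { complex := X
    projective := fun
      | 0 => ‹Projective S.X₂›
      | n + 1 => Q.projective n
    π := (ChainComplex.toSingle₀Equiv X S.X₃).symm ⟨S.g, hεg⟩
    quasiIso := quasiIso_toSingle₀Equiv_symm_of_exact (X := X) hS.epi_g hεg
      (exact_epi_comp hS.exact ε hεg) fun
        | 0 => exact_comp_mono Q.exact₀ S.f hS.mono_f hε
        | n + 1 => Q.exact_succ n }

end Splice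

section HomologyDesc

variable {D : Type*} [Category* D] {ι : Type*} {c : ComplexShape ι}

/-- The morphism out of the homology of `X` in degree `i` induced by a morphism `k` from `X.X i`
that vanishes on boundaries. Its source is spelled with `homologyFunctor`, as in
`ProjectiveResolution.isoLeftDerivedObj`. -/
def homologyDesc [HasZeroMorphisms D] [CategoryWithHomology D] (X : HomologicalComplex D c)
    {i j : ι} (hj : c.prev i = j) {Z : D} (k : X.X i ⟶ Z) (w : X.d j i ≫ k = 0) :
    (HomologicalComplex.homologyFunctor D c i).obj X ⟶ Z :=
  X.homologyι i ≫ X.descOpcycles k j hj w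

lemma homologyDesc_naturality [HasZeroMorphisms D] [CategoryWithHomology D]
    {X Y : HomologicalComplex D c} (φ : X ⟶ Y) {i j : ι} (hj : c.prev i = j) {Z W : D}
    {k : X.X i ⟶ Z} {l : Y.X i ⟶ W} (hk : X.d j i ≫ k = 0) (hl : Y.d j i ≫ l = 0) {g : Z ⟶ W}
    (hg : φ.f i ≫ l = k ≫ g) :
    (HomologicalComplex.homologyFunctor D c i).map φ ≫ homologyDesc Y hj l hl =
      homologyDesc X hj k hk ≫ g := by
  change HomologicalComplex.homologyMap φ i ≫ Y.homologyι i ≫ Y.descOpcycles l j hj hl =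
    (X.homologyι i ≫ X.descOpcycles k j hj hk) ≫ g
  simp [HomologicalComplex.opcyclesMap_comp_descOpcycles, hg, HomologicalComplex.descOpcycles_comp]

lemma mono_homologyDesc [Preadditive D] [CategoryWithHomology D] [Balanced D]
    (X : HomologicalComplex D c) {i j : ι} (hj : c.prev i = j) {Z : D} {k : X.X i ⟶ Z} (hk : Epi k)
    (w : X.d j i ≫ k = 0) (h : (ShortComplex.mk _ _ w).Exact) : Mono (homologyDesc X hj k w) := by
  have hp : X.d j i ≫ X.pOpcycles i = 0 := X.d_pOpcycles j i
  have : X.descOpcycles k j hj w ≫ h.desc (X.pOpcycles i) hp = 𝟙 _ := by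
    rw [← cancel_epi (X.pOpcycles i), X.p_descOpcycles_assoc, h.g_desc, Category.comp_id]
  have := mono_of_mono_fac this
  exact mono_comp (X.homologyι i) _

end HomologyDesc

lemma mapHomologicalComplex_d_comp_map {C D ι : Type*} [Category* C] [Category* D]
    [HasZeroMorphisms C] [HasZeroMorphisms D] (F : C ⥤ D) [F.PreservesZeroMorphisms]
    {c : ComplexShape ι} (X : HomologicalComplex C c) {i j : ι} {Z : C} {k : X.X i ⟶ Z}
    (w : X.d j i ≫ k = 0) : ((F.mapHomologicalComplex c).obj X).d j i ≫ F.map k = 0 :=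
  (F.map_comp _ _).symm.trans ((congrArg F.map w).trans (F.map_zero _ _))

section LeftDerived

variable {C D : Type*} [Category* C] [Category* D] [Abelian C] [Abelian D]
  [HasProjectiveResolutions C] {M K : C} (Q : ProjectiveResolution M) {n : ℕ}
  {q : Q.complex.X n ⟶ K} (w : Q.complex.d (n + 1) n ≫ q = 0)

/-- The morphism `L_n F (M) ⟶ F(K)` for a projective resolution `Q` of `M` and a morphism
`q : Q_n ⟶ K` vanishing on boundaries; in the intended use `q` is the cokernel of
`Q_{n+1} ⟶ Q_n`, so that `K` is an `n`-th syzygy of `M`. -/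
def leftDerivedToSyzygy (F : C ⥤ D) [F.Additive] : (F.leftDerived n).obj M ⟶ F.obj K :=
  (Q.isoLeftDerivedObj F n).hom ≫ homologyDesc ((F.mapHomologicalComplex _).obj Q.complex)
    (ChainComplex.prev ℕ n) (F.map q) (mapHomologicalComplex_d_comp_map F Q.complex w)

lemma leftDerivedToSyzygy_naturality {F G : C ⥤ D} [F.Additive] [G.Additive] (α : F ⟶ G) :
    (NatTrans.leftDerived α n).app M ≫ leftDerivedToSyzygy Q w G =
      leftDerivedToSyzygy Q w F ≫ α.app K := by
  have h := homologyDesc_naturality ((NatTrans.mapHomologicalComplex α _).app Q.complex)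
    (ChainComplex.prev ℕ n) (mapHomologicalComplex_d_comp_map F Q.complex w)
    (mapHomologicalComplex_d_comp_map G Q.complex w) (α.naturality q).symm
  rw [leftDerivedToSyzygy, leftDerivedToSyzygy, Q.leftDerived_app_eq]
  simp only [Category.assoc, Iso.inv_hom_id_assoc, h]

lemma mono_leftDerivedToSyzygy (hq : Epi q) (h : (ShortComplex.mk _ _ w).Exact) (F : C ⥤ D)
    [F.Additive] [PreservesFiniteColimits F] : Mono (leftDerivedToSyzygy Q w F) := by
  have : Mono (homologyDesc ((F.mapHomologicalComplex _).obj Q.complex) (ChainComplex.prev ℕ n)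
      (F.map q) (mapHomologicalComplex_d_comp_map F Q.complex w)) :=
    mono_homologyDesc _ _ (F.map_epi q) _
      (h.map_of_epi_of_preservesCokernel F hq inferInstance)
  exact mono_comp _ _

end LeftDerived

section Ext

variable {A : Type*} [Ring A] {C : Type u} [Category.{v} C]

instance preservesLimits_linearYoneda_obj [Preadditive C] [Linear A C] (Y : C) :
    PreservesLimits ((linearYoneda A C).obj Y) :=
  have : PreservesLimits ((linearYoneda A C).obj Y ⋙ forget₂ (ModuleCat A) AddCommGrpCat) :=
    inferInstanceAs (PreservesLimits (preadditiveYoneda.obj Y))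
  preservesLimits_of_reflects_of_preserves _ (forget₂ (ModuleCat A) AddCommGrpCat)

variable (A) in
lemma preservesColimit_linearCoyoneda_obj [Preadditive C] [Linear A C] {J : Type*} [Category* J]
    [HasColimitsOfShape J AddCommGrpCat.{v}] (f : J ⥤ C) (K : C)
    [PreservesColimit f (preadditiveCoyoneda.obj (op K))] :
    PreservesColimit f ((linearCoyoneda A C).obj (op K)) :=
  have : PreservesColimit f
      ((linearCoyoneda A C).obj (op K) ⋙ forget₂ (ModuleCat A) AddCommGrpCat) :=
    inferInstanceAs (PreservesColimit f (preadditiveCoyoneda.obj (op K)))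
  preservesColimit_of_reflects_of_preserves _ (forget₂ (ModuleCat A) AddCommGrpCat)

variable [Abelian C] [Linear A C] [EnoughProjectives C] {M K : C} (Q : ProjectiveResolution M)
  {n : ℕ} {q : Q.complex.X n ⟶ K} (w : Q.complex.d (n + 1) n ≫ q = 0)

variable (A) in
/-- The connecting map `Hom(K, -) ⟶ Extⁿ(M, -)` for an `n`-th syzygy `K` of `M`, obtained from
`leftDerivedToSyzygy` since `Extⁿ(-, Y)` is by definition the `n`-th left derived functor of
`Hom(-, Y)`, viewed as a covariant functor to the opposite of the category of modules. -/
def homToExt : (linearCoyoneda A C).obj (op K) ⟶ (Ext A C n).obj (op M) where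
  app Y := (leftDerivedToSyzygy Q w ((linearYoneda A C).obj Y).rightOp).unop
  naturality _ _ f := congrArg Quiver.Hom.unop
    (leftDerivedToSyzygy_naturality Q w (NatTrans.rightOp ((linearYoneda A C).map f))).symm

lemma epi_homToExt_app (hq : Epi q) (h : (ShortComplex.mk _ _ w).Exact) (Y : C) :
    Epi ((homToExt A Q w).app Y) :=
  have := preservesFiniteColimits_rightOp ((linearYoneda A C).obj Y)
  have := mono_leftDerivedToSyzygy Q w hq h ((linearYoneda A C).obj Y).rightOp
  unop_epi_of_mono (leftDerivedToSyzygy Q w ((linearYoneda A C).obj Y).rightOp)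

end Ext

lemma preservesColimit_discrete_ext_of_exact {A : Type*} [Ring A] {ι : Type w} {C : Type u}
    [Category.{max w v} C] [Abelian C] [Linear A C] [EnoughProjectives C] {M K : C}
    (Q : ProjectiveResolution M) {n : ℕ} {q : Q.complex.X n ⟶ K}
    {w : Q.complex.d (n + 1) n ≫ q = 0} (hq : Epi q) (h : (ShortComplex.mk _ _ w).Exact)
    (f : ι → C) [PreservesColimit (Discrete.functor f) (preadditiveCoyoneda.obj (op K))] :
    PreservesColimit (Discrete.functor f) ((Ext A C n).obj (op M)) :=
  have := preservesColimit_linearCoyoneda_obj A (Discrete.functor f) K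
  have := epi_homToExt_app (A := A) Q w hq h
  preservesColimit_discrete_of_epi.{w, v} (homToExt A Q w) f

theorem smallOmega1_ext1_commutes_with_direct_sums_general {A : Type*} [Ring A] {ι : Type w}
    {C : Type u} [Category.{max w v} C] [Abelian C] [Linear A C] [EnoughProjectives C]
    {S : ShortComplex C} (hS : S.ShortExact) [Projective S.X₂] (f : ι → C)
    [PreservesColimit (Discrete.functor f) (preadditiveCoyoneda.obj (op S.X₁))] :
    PreservesColimit (Discrete.functor f) ((Ext A C 1).obj (op S.X₃)) :=
  let Q := projectiveResolution S.X₁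
  preservesColimit_discrete_ext_of_exact.{w, v} (spliceProjectiveResolution hS Q)
    (n := 1) (K := S.X₁) (w := Q.complex_d_comp_π_f_zero) (inferInstanceAs (Epi (Q.π.f 0)))
    Q.exact₀ f

theorem smallOmega1_ext1_commutes_with_direct_sums (R : Type) [Ring R] (M : RMod R)
    (h : IsOmega1 R (fun K => IsSmallModule R K) M) :
    CommutesWithDirectSums R M := by
  obtain ⟨K, P, i, p, w, _, _, hipExact, _, small⟩ := h
  have hS : (ShortComplex.mk i p w).ShortExact := { exact := hipExact }
  intro ι
  have := small ι
  have (f : ι → RMod R) : PreservesColimit (Discrete.functor f) (extFun R 1 M) :=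
    smallOmega1_ext1_commutes_with_direct_sums_general.{0, 0} hS f
  exact preservesColimitsOfShape_of_discrete _
end
end

section
/- Let M be a finitely generated right R-module. If Ext¹_R(M, −) commutes with direct limits (filtered colimits), then M is an fp-Ω¹-module, i.e., there is an exact sequence 0 → K → P → M → 0 with P projective and K finitely presented. -/
open CategoryTheory CategoryTheory.Limits Opposite

noncomputable section

/-
Let `0 → K → P → M → 0` be exact with `P` finitely generated projective, and write `K` as the limit
of a direct system of finitely presented modules `K_j`. The class of this extension lifts along some
`u : K_j → K` to `Ext¹(M, K_j)`. As `Ext¹(P, K_j) = 0`, the lift is the image of a map `s : K → K_j`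
under the connecting map, so `1 - us` has image zero in `Ext¹(M, K)` and extends to a map `P → K`.
That map factors through some `K_j'` because `P` is finitely generated projective. Hence the
identity of `K` factors through a later stage, and `K` is a retract of a finitely presented module.
-/

universe t w v u

section Comparison

variable (A : Type*) [Ring A] {C : Type u} [Category.{v} C] [Abelian C] [Linear A C]
  {X : C} (P : ProjectiveResolution X)

/-- The complex `Hom(P, Y)` of `A`-modules attached to a projective resolution `P`, viewed in
`(ModuleCat A)ᵒᵖ` as in the definition of the functor `Ext A C`. -/
def homComplex (Y : C) : ChainComplex (ModuleCat A)ᵒᵖ ℕ :=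
  (((linearYoneda A C).obj Y).rightOp.mapHomologicalComplex _).obj P.complex

/-- The functoriality of `Hom(P, Y)` in `Y`; it is reversed because of the opposite category. -/
def homComplexMap {Y Z : C} (u : Y ⟶ Z) : homComplex A P Z ⟶ homComplex A P Y :=
  (NatTrans.mapHomologicalComplex (NatTrans.rightOp ((linearYoneda A C).map u)) _).app P.complex

/-- The module of `n`-cocycles of `Hom(P, Y)`, encoded as the opposite of the `n`-opcycles of
`homComplex A P Y`. -/
def extCocycles (n : ℕ) (Y : C) : ModuleCat A := ((homComplex A P Y).opcycles n).unop

variable {A} in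
/-- The morphism `Pₙ ⟶ Y` underlying an `n`-cocycle of `Hom(P, Y)`. -/
def extCocycleHom {n : ℕ} {Y : C} (z : extCocycles A P n Y) : P.complex.X n ⟶ Y :=
  ((homComplex A P Y).pOpcycles n).unop z

/-- Postcomposition of cocycles with a morphism `Y ⟶ Z`. -/
def extCocyclesMap (n : ℕ) {Y Z : C} (u : Y ⟶ Z) : extCocycles A P n Y ⟶ extCocycles A P n Z :=
  (HomologicalComplex.opcyclesMap (homComplexMap A P u) n).unop

variable {n : ℕ} {Y Z : C}

lemma exists_extCocycleHom_eq (f : P.complex.X n ⟶ Y) (hf : P.complex.d (n + 1) n ≫ f = 0) :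
    ∃ z : extCocycles A P n Y, extCocycleHom P z = f := by
  have hex : (ShortComplex.mk _ _ ((homComplex A P Y).d_pOpcycles (n + 1) n)).Exact :=
    ShortComplex.exact_of_g_is_cokernel _
      ((homComplex A P Y).opcyclesIsCokernel (n + 1) n (by simp))
  exact (ShortComplex.moduleCat_exact_iff _).1 hex.unop f hf

variable {A}

lemma d_comp_extCocycleHom (z : extCocycles A P n Y) :
    P.complex.d (n + 1) n ≫ extCocycleHom P z = 0 :=
  ConcreteCategory.congr_hom
    (congrArg Quiver.Hom.unop ((homComplex A P Y).d_pOpcycles (n + 1) n)) z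

lemma extCocycleHom_injective :
    Function.Injective (extCocycleHom P : extCocycles A P n Y → (P.complex.X n ⟶ Y)) :=
  (ModuleCat.mono_iff_injective ((homComplex A P Y).pOpcycles n).unop).1 inferInstance

lemma extCocycleHom_add (z z' : extCocycles A P n Y) :
    extCocycleHom P (z + z') = extCocycleHom P z + extCocycleHom P z' :=
  map_add ((homComplex A P Y).pOpcycles n).unop.hom z z'

lemma extCocycleHom_map (u : Y ⟶ Z) (z : extCocycles A P n Y) :
    extCocycleHom P (extCocyclesMap A P n u z) = extCocycleHom P z ≫ u :=
  ConcreteCategory.congr_hom (congrArg Quiver.Hom.unop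
    (HomologicalComplex.p_opcyclesMap (homComplexMap A P u) n)) z

section

variable [HasExt.{w} C]

variable (A n Y) in
/-- The class of a cocycle in `Abelian.Ext X Y n`, where `P` is a projective resolution of `X`. -/
def abelianExtClass : extCocycles A P n Y →+ Abelian.Ext X Y n :=
  .mk' (fun z ↦ P.extMk (extCocycleHom P z) (n + 1) rfl (d_comp_extCocycleHom P z)) fun z z' ↦ by
    simp only [P.add_extMk, extCocycleHom_add]

lemma abelianExtClass_surjective : Function.Surjective (abelianExtClass A P n Y) := by
  intro x
  obtain ⟨f, hf, rfl⟩ := P.extMk_surjective x (n + 1) rfl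
  obtain ⟨z, rfl⟩ := exists_extCocycleHom_eq A P f hf
  exact ⟨z, rfl⟩

lemma abelianExtClass_eq_zero_iff (z : extCocycles A P (n + 1) Y) :
    abelianExtClass A P (n + 1) Y z = 0 ↔
      ∃ g : P.complex.X n ⟶ Y, P.complex.d (n + 1) n ≫ g = extCocycleHom P z :=
  P.extMk_eq_zero_iff _ _ rfl (d_comp_extCocycleHom P z) n rfl

lemma abelianExtClass_map (u : Y ⟶ Z) (z : extCocycles A P n Y) :
    abelianExtClass A P n Z (extCocyclesMap A P n u z) =
      (abelianExtClass A P n Y z).comp (Abelian.Ext.mk₀ u) (add_zero n) := by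
  simp only [abelianExtClass, AddMonoidHom.mk'_apply, extCocycleHom_map, P.extMk_comp_mk₀]

end

variable [EnoughProjectives C]

variable (A n Y) in
/-- The cohomology of `Hom(P, Y)` computes the derived functor `Ext A C n` at `(X, Y)`. -/
def homologyHomComplexIso : ((homComplex A P Y).homology n).unop ≅ ((Ext A C n).obj (op X)).obj Y :=
  (P.isoLeftDerivedObj ((linearYoneda A C).obj Y).rightOp n).unop

lemma homologyHomComplexIso_naturality (u : Y ⟶ Z) :
    (homologyHomComplexIso A P n Y).hom ≫ ((Ext A C n).obj (op X)).map u =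
      (HomologicalComplex.homologyMap (homComplexMap A P u) n).unop ≫
        (homologyHomComplexIso A P n Z).hom := by
  have h := P.leftDerived_app_eq (NatTrans.rightOp ((linearYoneda A C).map u)) n
  rw [← Category.assoc, Iso.eq_comp_inv] at h
  exact congrArg Quiver.Hom.unop h

variable (A n Y) in
/-- The class of a cocycle in the derived functor `Ext A C n` at `(X, Y)`. -/
def derivedExtClass : extCocycles A P n Y ⟶ ((Ext A C n).obj (op X)).obj Y :=
  ((homComplex A P Y).homologyι n).unop ≫ (homologyHomComplexIso A P n Y).hom

lemma derivedExtClass_surjective : Function.Surjective (derivedExtClass A P n Y) :=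
  have : Epi ((homComplex A P Y).homologyι n).unop := inferInstance
  (ModuleCat.epi_iff_surjective _).1 (epi_comp' this inferInstance)

lemma derivedExtClass_eq_zero_iff (z : extCocycles A P (n + 1) Y) :
    derivedExtClass A P (n + 1) Y z = 0 ↔
      ∃ g : P.complex.X n ⟶ Y, P.complex.d (n + 1) n ≫ g = extCocycleHom P z := by
  let K := homComplex A P Y
  have hex : (ShortComplex.mk _ _ (K.homologyι_comp_fromOpcycles (n + 1) n)).Exact :=
    ShortComplex.exact_of_f_is_kernel _ (K.homologyIsKernel (n + 1) n (by simp))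
  have hd (g : P.complex.X n ⟶ Y) :
      extCocycleHom P ((K.fromOpcycles (n + 1) n).unop g) = P.complex.d (n + 1) n ≫ g :=
    ConcreteCategory.congr_hom (congrArg Quiver.Hom.unop (K.p_fromOpcycles (n + 1) n)) g
  calc
    _ ↔ (K.homologyι (n + 1)).unop z = 0 :=
      (homologyHomComplexIso A P (n + 1) Y).toLinearEquiv.map_eq_zero_iff
    _ ↔ ∃ g, (K.fromOpcycles (n + 1) n).unop g = z :=
      ((ShortComplex.ShortExact.moduleCat_exact_iff_function_exact _).1 hex.unop z)
    _ ↔ _ := exists_congr fun g ↦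
      (extCocycleHom_injective P).eq_iff.symm.trans (Eq.congr_left (hd g))

lemma derivedExtClass_naturality (u : Y ⟶ Z) :
    derivedExtClass A P n Y ≫ ((Ext A C n).obj (op X)).map u =
      extCocyclesMap A P n u ≫ derivedExtClass A P n Z := by
  have hι := congrArg Quiver.Hom.unop
    (HomologicalComplex.homologyι_naturality (homComplexMap A P u) n)
  calc
    _ = ((homComplex A P Y).homologyι n).unop ≫ _ ≫ (homologyHomComplexIso A P n Z).hom :=
      (Category.assoc _ _ _).trans (_ ≫= homologyHomComplexIso_naturality P u)
    _ = _ := (Category.assoc _ _ _).symm.trans ((hι =≫ _).trans (Category.assoc _ _ _))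

variable [HasExt.{w} C]

variable (A n Y) in
/-- The comparison between the derived functor `Ext A C (n + 1)` and `Abelian.Ext`: both are the
quotient of the `(n + 1)`-cocycles by the coboundaries. -/
def extAddEquiv : ((Ext A C (n + 1)).obj (op X)).obj Y ≃+ Abelian.Ext X Y (n + 1) :=
  (QuotientAddGroup.quotientKerEquivOfSurjective (derivedExtClass A P (n + 1) Y).hom.toAddMonoidHom
    (derivedExtClass_surjective P)).symm.trans <|
  (QuotientAddGroup.quotientAddEquivOfEq <| AddSubgroup.ext fun z ↦
    (derivedExtClass_eq_zero_iff P z).trans (abelianExtClass_eq_zero_iff P z).symm).trans <|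
  QuotientAddGroup.quotientKerEquivOfSurjective (abelianExtClass A P (n + 1) Y)
    (abelianExtClass_surjective P)

lemma extAddEquiv_derivedExtClass (z : extCocycles A P (n + 1) Y) :
    extAddEquiv A P n Y (derivedExtClass A P (n + 1) Y z) = abelianExtClass A P (n + 1) Y z := by
  have hz : (QuotientAddGroup.quotientKerEquivOfSurjective
      (derivedExtClass A P (n + 1) Y).hom.toAddMonoidHom (derivedExtClass_surjective P)).symm
        (derivedExtClass A P (n + 1) Y z) = z :=
    (AddEquiv.symm_apply_eq _).2 rfl
  simp only [extAddEquiv, AddEquiv.trans_apply]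
  rw [hz]
  rfl

lemma extAddEquiv_map (u : Y ⟶ Z) (x : ((Ext A C (n + 1)).obj (op X)).obj Y) :
    extAddEquiv A P n Z (((Ext A C (n + 1)).obj (op X)).map u x) =
      (extAddEquiv A P n Y x).comp (Abelian.Ext.mk₀ u) (add_zero (n + 1)) := by
  obtain ⟨z, rfl⟩ := derivedExtClass_surjective P x
  have h := ConcreteCategory.congr_hom (derivedExtClass_naturality P u) z
  simp only [ConcreteCategory.comp_apply] at h
  rw [h, extAddEquiv_derivedExtClass, extAddEquiv_derivedExtClass, abelianExtClass_map]

end Comparison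

/-- The derived functor `Ext A C (n + 1)` and `Abelian.Ext` agree as functors of the second
argument. -/
def extNatIso (A : Type*) [Ring A] {C : Type u} [Category.{v} C] [Abelian C] [Linear A C]
    [EnoughProjectives C] [HasExt.{v} C] (n : ℕ) (X : C) :
    (Ext A C (n + 1)).obj (op X) ⋙ forget₂ (ModuleCat A) AddCommGrpCat ≅
      Abelian.extFunctorObj.{v} X (n + 1) :=
  NatIso.ofComponents
    (fun Y ↦ (extAddEquiv A (ProjectiveResolution.of X) n Y).toAddCommGrpIso) fun u ↦ by
      ext x
      exact extAddEquiv_map _ u x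

section Retract

open Abelian

variable {C : Type u} [Category.{v} C] [Abelian C] [HasExt.{w} C]

/-- The canonical map `colim Extⁿ(X, D j) → Extⁿ(X, colim D)` is surjective for every direct system
`D` in `C` over a nonempty directed set. -/
def ExtLiftsAlongDirectLimits (X : C) (n : ℕ) : Prop :=
  ∀ (J : Type t) [Preorder J] [IsDirectedOrder J] [Nonempty J] (D : J ⥤ C) (c : Cocone D)
    (_ : IsColimit c) (x : Ext X c.pt n),
    ∃ (j : J) (y : Ext X (D.obj j) n), y.comp (Ext.mk₀ (c.ι.app j)) (add_zero n) = x

lemma exists_comp_add_comp_eq_id {S : ShortComplex C} (hS : S.ShortExact) [Projective S.X₂]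
    {Y : C} (u : Y ⟶ S.X₁) (y : Ext S.X₃ Y 1)
    (hy : y.comp (Ext.mk₀ u) (add_zero 1) = hS.extClass) :
    ∃ (s : S.X₁ ⟶ Y) (r : S.X₂ ⟶ S.X₁), s ≫ u + S.f ≫ r = 𝟙 S.X₁ := by
  obtain ⟨s', hs⟩ :=
    Ext.contravariant_sequence_exact₃ hS Y y (Ext.eq_zero_of_projective _) (add_zero 1)
  obtain ⟨s, rfl⟩ := Ext.addEquiv₀.symm.surjective s'
  have hsu : hS.extClass.comp (Ext.mk₀ (𝟙 S.X₁ - s ≫ u)) (add_zero 1) = 0 := by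
    have h : hS.extClass.comp (Ext.mk₀ (s ≫ u)) (add_zero 1) = hS.extClass := by
      rw [← Ext.mk₀_comp_mk₀, ← Ext.comp_assoc_of_second_deg_zero]
      exact (congrArg (Ext.comp · _ _) hs).trans hy
    rw [sub_eq_add_neg, Ext.mk₀_add, Ext.mk₀_neg, Ext.comp_add, Ext.comp_neg, h, Ext.comp_mk₀_id,
      add_neg_cancel]
  obtain ⟨r', hr⟩ := Ext.contravariant_sequence_exact₁ hS S.X₁ _ (add_zero 1) hsu
  obtain ⟨r, rfl⟩ := Ext.addEquiv₀.symm.surjective r'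
  refine ⟨s, r, ?_⟩
  have hr : S.f ≫ r = 𝟙 S.X₁ - s ≫ u :=
    Ext.addEquiv₀.symm.injective ((Ext.mk₀_comp_mk₀ S.f r).symm.trans hr)
  rw [hr, add_sub_cancel]

lemma exists_section_ι_app {J : Type t} [Preorder J] [IsDirectedOrder J] [Nonempty J]
    {D : J ⥤ C} {c : Cocone D} (hc : IsColimit c) {P M : C} {f : c.pt ⟶ P} {g : P ⟶ M}
    {w : f ≫ g = 0} (hS : (ShortComplex.mk f g w).ShortExact) [Projective P]
    (hM : ExtLiftsAlongDirectLimits.{t} M 1)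
    (hP : ∀ r : P ⟶ c.pt, ∃ (j : J) (l : P ⟶ D.obj j), l ≫ c.ι.app j = r) :
    ∃ (j : J) (s : c.pt ⟶ D.obj j), s ≫ c.ι.app j = 𝟙 c.pt := by
  have : Projective (ShortComplex.mk f g w).X₂ := ‹Projective P›
  obtain ⟨i, y, hy⟩ := hM J D c hc hS.extClass
  obtain ⟨s, r, hsr⟩ := exists_comp_add_comp_eq_id hS (c.ι.app i) y hy
  obtain ⟨i', l, rfl⟩ := hP r
  obtain ⟨j, hij, hij'⟩ := exists_ge_ge i i'
  refine ⟨j, s ≫ D.map (homOfLE hij) + f ≫ l ≫ D.map (homOfLE hij'), ?_⟩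
  simpa using hsr

end Retract

lemma extLiftsAlongDirectLimits_of_preservesColimitsOfShape (A : Type*) [Ring A] {C : Type u}
    [Category.{v} C] [Abelian C] [Linear A C] [EnoughProjectives C] [HasExt.{v} C] (X : C) (n : ℕ)
    (h : ∀ (J : Type v) [Preorder J] [IsDirectedOrder J] [Nonempty J],
      PreservesColimitsOfShape J ((Ext A C (n + 1)).obj (op X))) :
    ExtLiftsAlongDirectLimits.{v, v} X (n + 1) := by
  intro J _ _ _ D c hc x
  have := h J
  have : PreservesColimitsOfShape J (Abelian.extFunctorObj.{v} X (n + 1)) :=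
    preservesColimitsOfShape_of_natIso (extNatIso A n X)
  exact Concrete.isColimit_exists_rep _
    (isColimitOfPreserves (Abelian.extFunctorObj.{v} X (n + 1)) hc) x

lemma exists_factorization_ι_app_of_projective {A : Type u} [Ring A] [Small.{v} A] {J : Type*}
    [Category J] [IsFiltered J] {D : J ⥤ ModuleCat.{v} A}
    [PreservesColimit D (forget (ModuleCat.{v} A))] {c : Cocone D} (hc : IsColimit c)
    {P : ModuleCat.{v} A} [Module.Finite A P] [Projective P] (f : P ⟶ c.pt) :
    ∃ (j : J) (g : P ⟶ D.obj j), g ≫ c.ι.app j = f := by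
  have : Module.Projective A P := (IsProjective.iff_projective P).2 ‹_›
  obtain ⟨n, p, q, -, -, hpq⟩ := Module.Finite.exists_comp_eq_id_of_projective A P
  choose k x hx using fun a : Fin n ↦ Concrete.isColimit_exists_rep D hc (f (p (Pi.single a 1)))
  classical
  obtain ⟨j, hj⟩ := IsFiltered.sup_objs_exists (Finset.univ.image k)
  let φ (a : Fin n) : k a ⟶ j := (hj (by simp)).some
  let l : (Fin n → A) →ₗ[A] D.obj j := (Pi.basisFun A (Fin n)).constr ℕ fun a ↦ D.map (φ a) (x a)
  have hl : (c.ι.app j).hom ∘ₗ l = f.hom ∘ₗ p :=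
    (Pi.basisFun A (Fin n)).ext fun a ↦ by simp [l, ← hx]
  refine ⟨j, ModuleCat.ofHom (l ∘ₗ q), ?_⟩
  ext z
  exact (DFunLike.congr_fun hl (q z)).trans (congrArg f (DFunLike.congr_fun hpq z))

section DirectLimits

variable {A : Type u} [Ring A]

/-- A criterion for a cocone over a filtered diagram of modules to be colimiting. -/
def isColimitOfIsFiltered {J : Type u} [SmallCategory J] [IsFiltered J] {D : J ⥤ ModuleCat.{u} A}
    (c : Cocone D) (hsurj : ∀ x : c.pt, ∃ i, ∃ y : D.obj i, c.ι.app i y = x)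
    (hinj : ∀ i (x : D.obj i), c.ι.app i x = 0 → ∃ (k : J) (f : i ⟶ k), D.map f x = 0) :
    IsColimit c :=
  have := reflectsColimitsOfShape_of_reflectsIsomorphisms (J := J) (G := forget (ModuleCat.{u} A))
  isColimitOfReflects (forget (ModuleCat A)) <|
    Types.FilteredColimit.isColimitOf' _ _
      (fun x ↦ (hsurj x).imp fun _ ↦ .imp fun _ ↦ Eq.symm) fun i x y hxy ↦ by
        obtain ⟨k, f, hf⟩ :=
          hinj i (x - y) ((map_sub (c.ι.app i).hom x y).trans (sub_eq_zero.2 hxy))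
        exact ⟨k, f, sub_eq_zero.1 ((map_sub (D.map f).hom x y).symm.trans hf)⟩

variable (N : ModuleCat.{u} A)

open Finsupp in
/-- The index set of the canonical direct system of finitely presented modules with limit `N`: a
finite set `S` of elements of `N` and a finitely generated module of linear relations between them.
The relations live in `N →₀ A` rather than in `S →₀ A`, so that stages are ordered by inclusion. -/
abbrev FinitePresentationStage : Type u :=
  {p : Finset N × Submodule A (N →₀ A) //
    p.2.FG ∧ p.2 ≤ supported A A p.1 ⊓ LinearMap.ker (linearCombination A (id : N → N))}

namespace FinitePresentationStage
open Finsupp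
variable {N}

/-- The inclusion into `N →₀ A` of the free module on the generators of a stage. -/
def inclusion (p : FinitePresentationStage N) : (p.1.1 →₀ A) →ₗ[A] N →₀ A :=
  lmapDomain A A Subtype.val

/-- The relations of a stage, as a submodule of the free module on its generators. -/
def relations (p : FinitePresentationStage N) : Submodule A (p.1.1 →₀ A) :=
  p.1.2.comap p.inclusion

lemma inclusion_injective (p : FinitePresentationStage N) : Function.Injective p.inclusion :=
  mapDomain_injective Subtype.val_injective

lemma range_inclusion (p : FinitePresentationStage N) :
    LinearMap.range p.inclusion = supported A A p.1.1 := by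
  rw [inclusion, LinearMap.range_eq_map, ← supported_univ, lmapDomain_supported, Set.image_univ,
    Subtype.range_coe]

lemma fg_relations (p : FinitePresentationStage N) : p.relations.FG := by
  refine Submodule.fg_of_fg_map_injective p.inclusion p.inclusion_injective ?_
  rw [relations, Submodule.map_comap_eq, range_inclusion,
    inf_eq_right.2 (p.2.2.trans inf_le_left)]
  exact p.2.1

/-- The map between the free modules on the generators of two comparable stages. -/
def transition {p q : FinitePresentationStage N} (h : p ≤ q) : (p.1.1 →₀ A) →ₗ[A] (q.1.1 →₀ A) :=
  lmapDomain A A (Set.inclusion h.1)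

lemma inclusion_transition {p q : FinitePresentationStage N} (h : p ≤ q) (z : p.1.1 →₀ A) :
    q.inclusion (transition h z) = p.inclusion z :=
  (DFunLike.congr_fun (lmapDomain_comp A A (Set.inclusion h.1) Subtype.val) z).symm

lemma relations_le_comap {p q : FinitePresentationStage N} (h : p ≤ q) :
    p.relations ≤ q.relations.comap (transition h) := by
  intro x hx
  rw [Submodule.mem_comap, relations, Submodule.mem_comap, inclusion_transition]
  exact h.2 hx

instance : IsDirectedOrder (FinitePresentationStage N) where
  directed p q := by
    classical
    exact ⟨⟨p.1 ⊔ q.1, p.2.1.sup q.2.1, sup_le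
      (p.2.2.trans (inf_le_inf_right _ (supported_mono (by simp))))
      (q.2.2.trans (inf_le_inf_right _ (supported_mono (by simp))))⟩,
      (le_sup_left : p.1 ≤ _), (le_sup_right : q.1 ≤ _)⟩

instance : Nonempty (FinitePresentationStage N) := ⟨⟨(∅, ⊥), Submodule.fg_bot, bot_le⟩⟩

variable (N) in
/-- The direct system of the finitely presented modules given by the stages. -/
def diagram : FinitePresentationStage N ⥤ ModuleCat.{u} A where
  obj p := ModuleCat.of A ((p.1.1 →₀ A) ⧸ p.relations)
  map f := ModuleCat.ofHom (Submodule.mapQ _ _ _ (relations_le_comap (leOfHom f)))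
  map_id _ := ModuleCat.hom_ext (Submodule.linearMap_qext _ (by ext; simp [transition]))
  map_comp _ _ := ModuleCat.hom_ext (Submodule.linearMap_qext _ (by ext; simp [transition]))

instance (p : FinitePresentationStage N) :
    Module.FinitePresentation A ((diagram N).obj p) :=
  have := Module.finitePresentation_of_projective A (p.1.1 →₀ A)
  Module.finitePresentation_of_surjective p.relations.mkQ p.relations.mkQ_surjective
    (p.relations.ker_mkQ.symm ▸ p.fg_relations)

variable (N) in
/-- The cocone with point `N` over `FinitePresentationStage.diagram N`. -/
def cocone : Cocone (diagram N) where
  pt := N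
  ι :=
    { app p := ModuleCat.ofHom (p.relations.liftQ
        (linearCombination A id ∘ₗ p.inclusion) fun _ hx ↦ (p.2.2 hx).2)
      naturality _ _ f := ModuleCat.hom_ext <| Submodule.linearMap_qext _ <| LinearMap.ext fun z ↦
        congrArg (linearCombination A id) (inclusion_transition (leOfHom f) z) }

variable (N) in
/-- A module is the direct limit of its finite presentation stages. -/
def isColimitCocone : IsColimit (cocone N) :=
  isColimitOfIsFiltered _
    (fun x ↦ by
      refine ⟨⟨({x}, ⊥), Submodule.fg_bot, bot_le⟩,
        Submodule.Quotient.mk (single ⟨x, Finset.mem_singleton_self x⟩ 1), ?_⟩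
      exact (congrArg (linearCombination A id) mapDomain_single).trans
        ((linearCombination_single A 1 x).trans (one_smul A x)))
    (fun p y hy ↦ by
      obtain ⟨z, rfl⟩ := Submodule.Quotient.mk_surjective _ y
      have hzp : A ∙ p.inclusion z ≤
          supported A A p.1.1 ⊓ LinearMap.ker (linearCombination A (id : N → N)) :=
        (Submodule.span_singleton_le_iff_mem _ _).2
          ⟨p.range_inclusion ▸ LinearMap.mem_range_self _ z, hy⟩
      let q : FinitePresentationStage N := ⟨(p.1.1, p.1.2 ⊔ A ∙ p.inclusion z),
        p.2.1.sup (Submodule.fg_span_singleton _), sup_le p.2.2 hzp⟩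
      have hpq : p ≤ q := ⟨le_rfl, le_sup_left⟩
      refine ⟨q, homOfLE hpq, (Submodule.Quotient.mk_eq_zero _).2 ?_⟩
      rw [relations, Submodule.mem_comap, inclusion_transition]
      exact (le_sup_right : _ ≤ q.1.2) (Submodule.mem_span_singleton_self (p.inclusion z)))

end FinitePresentationStage

end DirectLimits

lemma finitePresentation_of_comp_eq_id {A N Q : Type*} [Ring A] [AddCommGroup N] [Module A N]
    [AddCommGroup Q] [Module A Q] [Module.FinitePresentation A Q] (f : Q →ₗ[A] N) (g : N →ₗ[A] Q)
    (h : f ∘ₗ g = LinearMap.id) : Module.FinitePresentation A N :=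
  Module.finitePresentation_of_surjective f
    (Function.LeftInverse.surjective (DFunLike.congr_fun h))
    (LinearMap.ker_eq_range_of_comp_eq_id h ▸ Submodule.FG.of_finite)

section ModuleCat

variable {A : Type u} [Ring A]

lemma exists_epi_projective_finite (N : ModuleCat.{u} A) [Module.Finite A N] :
    ∃ (P : ModuleCat.{u} A) (p : P ⟶ N), Epi p ∧ Projective P ∧ Module.Finite A P := by
  obtain ⟨n, p, hp⟩ := Module.Finite.exists_fin' A N
  exact ⟨.of A (Fin n → A), ModuleCat.ofHom p, (ModuleCat.epi_iff_surjective _).2 hp,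
    (IsProjective.iff_projective _).1 inferInstance, inferInstanceAs (Module.Finite A (Fin n → A))⟩

lemma finitePresentation_of_extLiftsAlongDirectLimits {S : ShortComplex (ModuleCat.{u} A)}
    (hS : S.ShortExact) [Projective S.X₂] [Module.Finite A S.X₂]
    (h : ExtLiftsAlongDirectLimits.{u, u} S.X₃ 1) : Module.FinitePresentation A S.X₁ := by
  have hc := FinitePresentationStage.isColimitCocone S.X₁
  obtain ⟨j, s, hs⟩ := exists_section_ι_app hc (f := S.f) (g := S.g) (w := S.zero) hS h
    fun r ↦ exists_factorization_ι_app_of_projective hc r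
  exact finitePresentation_of_comp_eq_id _ s.hom (congrArg ModuleCat.Hom.hom hs)

end ModuleCat

theorem fg_ext1_commutes_with_direct_limits_implies_fpOmega1_general {A : Type u} [Ring A]
    (M : ModuleCat.{u} A) [Module.Finite A M]
    (h : ExtLiftsAlongDirectLimits.{u, u} M 1) :
    ∃ (K P : ModuleCat.{u} A) (i : K ⟶ P) (p : P ⟶ M) (w : i ≫ p = 0), Mono i ∧ Epi p ∧
      (ShortComplex.mk i p w).Exact ∧ Projective P ∧ Module.FinitePresentation A K := by
  obtain ⟨P, p, hp, hP, hfin⟩ := exists_epi_projective_finite M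
  have hex := ShortComplex.exact_kernel p
  refine ⟨kernel p, P, kernel.ι p, p, kernel.condition p, inferInstance, hp, hex, hP, ?_⟩
  exact finitePresentation_of_extLiftsAlongDirectLimits
    (S := ShortComplex.mk _ _ (kernel.condition p)) { exact := hex } h

theorem fg_ext1_commutes_with_direct_limits_implies_fpOmega1
    (R : Type) [Ring R] (M : RMod R) (hfg : Module.Finite Rᵐᵒᵖ M)
    (h : CommutesWithDirectLimits R M) :
    IsOmega1 R (fun K => Module.FinitePresentation Rᵐᵒᵖ K) M := by
  exact fg_ext1_commutes_with_direct_limits_implies_fpOmega1_general M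
    (extLiftsAlongDirectLimits_of_preservesColimitsOfShape ℤ M 0 h)
end
end
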